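/- arXiv:2208.08915 — 5 statements merged into one kernel-verified Lean document; each statement's English description precedes it below -/
import Mathlib

section
/- Let X be a binary string (over {0,1}) of length n, let P = X·0^n and T = 1^n·0^{2n}, and let j be the number of occurrences of the letter 1 in X. For t ∈ [1..n], let max_t = max over i ∈ [0..n−t] of the number of 1s in X[i..i+t). Then for every i ∈ [0..n), writing t = n−i, the minimum over x ∈ [0..2n] of δH(rot_x(P), T[i..i+2n)) equals t − max_t + j − max_t. -/
/-- The fragment `S[i..j)` of a string (list) `S`. -/
def frag {α : Type*} (S : List α) (i j : ℕ) : List α := (S.take j).drop i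

/-- The rotation `rot_x(S) = S[x..|S|)·S[0..x)`. -/
def rot {α : Type*} (x : ℕ) (S : List α) : List α := S.drop x ++ S.take x

/-- The Hamming distance of two strings (of equal length): the number of positions at which
they differ. -/
def hamDist {α : Type*} [DecidableEq α] (U V : List α) : ℕ :=
  (List.zipWith (fun a b => if a = b then (0 : ℕ) else 1) U V).sum

theorem hamDist_aux_false (A : List Bool) :
    hamDist A (List.replicate A.length false) = A.count true := by
  induction A with
  | nil => simp [hamDist]
  | cons a A ih =>
    simp only [hamDist] at ih
    cases a <;> simp [hamDist, List.replicate_succ, ih]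
    omega

theorem hamDist_aux (t : ℕ) (A : List Bool) (s : ℕ) (h : A.length = t + s) :
    hamDist A (List.replicate t true ++ List.replicate s false)
      = (A.take t).count false + (A.drop t).count true := by
  induction t generalizing A with
  | zero =>
    have hs : s = A.length := by omega
    subst hs
    simpa using hamDist_aux_false A
  | succ t ih =>
    cases A with
    | nil => simp at h; omega
    | cons a A =>
      have := ih A (by simp at h; omega)
      simp only [hamDist] at this
      cases a <;> simp [hamDist, List.replicate_succ, this]
      omega

theorem frag_eq (X : List Bool) (k t : ℕ) : frag X k (k + t) = (X.drop k).take t := by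
  simp [frag, List.drop_take]

theorem hamDist_count (t : ℕ) (A : List Bool) (s : ℕ) (h : A.length = t + s) :
    hamDist A (List.replicate t true ++ List.replicate s false)
      = (t - (A.take t).count true) + (A.count true - (A.take t).count true) := by
  rw [hamDist_aux t A s h]
  have h1 : (A.take t).count true + (A.take t).count false = t := by
    rw [List.count_true_add_count_false]; simp; omega
  have h2 : A.count true = (A.take t).count true + (A.drop t).count true := by
    rw [← List.count_append, List.take_append_drop]
  omega

theorem rot_count (x : ℕ) (S : List Bool) : (rot x S).count true = S.count true := by
  conv_rhs => rw [← List.take_append_drop x S]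
  simp only [rot, List.count_append]; omega

theorem rot_length (x : ℕ) (S : List Bool) : (rot x S).length = S.length := by
  simp [rot]; omega

theorem take_rot_low (X : List Bool) (n x t : ℕ) (hX : X.length = n) (hx : x ≤ n) (ht : t ≤ n) :
    ((rot x (X ++ List.replicate n false)).take t).count true
      = ((X.drop x).take t).count true := by
  have e : rot x (X ++ List.replicate n false)
      = X.drop x ++ (List.replicate n false ++ X.take x) := by
    simp [rot, List.drop_append, List.take_append, hX, Nat.sub_eq_zero_of_le hx]
  rw [e, List.take_append, List.count_append, List.take_append]
  have hz : t - (X.length - x) - n = 0 := by omega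
  simp [List.count_replicate, List.take_replicate, hz]

theorem take_rot_high (X : List Bool) (n x t : ℕ) (hX : X.length = n) (hx : n ≤ x) (ht : t ≤ n) :
    ((rot x (X ++ List.replicate n false)).take t).count true
      ≤ (X.take t).count true := by
  have e : rot x (X ++ List.replicate n false)
      = List.replicate (n - (x - n)) false ++ (X ++ List.replicate (min (x - n) n) false) := by
    simp [rot, List.drop_append, List.take_append, hX, hx, List.take_of_length_le,
      List.drop_of_length_le]
  rw [e, List.take_append, List.count_append, List.take_append, List.count_append]
  have : ((X.take (t - (List.replicate (n - (x - n)) false).length))).count true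
      ≤ (X.take t).count true :=
    (List.take_sublist_take_left (by omega)).count_le _
  simp [List.count_replicate, List.take_replicate] at this ⊢
  exact this

/-- For a binary string `X` (where `true` plays the role of the letter 1) of length `n`,
with `P = X·0^n`, `T = 1^n·0^{2n}`, `j` the number of 1s in `X`, and, for `t ∈ [1..n]`,
`max_t` the maximum number of 1s in a length-`t` fragment of `X`: for every `i ∈ [0..n)`,
with `t = n − i`, the minimum over `x ∈ [0..2n]` of `δH(rot_x(P), T[i..i+2n))` equals
`t − max_t + j − max_t`. -/
theorem mismatch_cpm_jumbled_reduction
    (X : List Bool) (n : ℕ) (hX : X.length = n)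
    (P T : List Bool)
    (hP : P = X ++ List.replicate n false)
    (hT : T = List.replicate n true ++ List.replicate (2 * n) false)
    (j : ℕ) (hj : j = X.count true)
    (i : ℕ) (hi : i < n) :
    sInf {v | ∃ x, x ≤ 2 * n ∧ v = hamDist (rot x P) (frag T i (i + 2 * n))} =
      ((n - i) - (Finset.range (n - (n - i) + 1)).sup
          (fun i' => (frag X i' (i' + (n - i))).count true)) +
        (j - (Finset.range (n - (n - i) + 1)).sup
          (fun i' => (frag X i' (i' + (n - i))).count true)) := by
  have hfr : frag T i (i + 2 * n)
      = List.replicate (n - i) true ++ List.replicate (2 * n - (n - i)) false := by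
    have h1 : i - n = 0 := by omega
    have h2 : min (2 * n - (n - i)) (2 * n) = 2 * n - (n - i) := by omega
    rw [frag_eq, hT]
    simp [List.drop_append, List.take_append, List.take_replicate, h1]
    omega
  set t := n - i with ht
  set M := (Finset.range (n - t + 1)).sup (fun i' => (frag X i' (i' + t)).count true) with hM
  have hlen : ∀ x, (rot x P).length = t + (2 * n - t) := by
    intro x; rw [rot_length, hP]; simp [hX]; omega
  have hval : ∀ x, hamDist (rot x P) (frag T i (i + 2 * n))
      = (t - ((rot x P).take t).count true) + (j - ((rot x P).take t).count true) := by
    intro x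
    rw [hfr, hamDist_count _ _ _ (hlen x), rot_count, hP, hj]
    simp [List.count_replicate]
  have hMle : ∀ k, k ≤ i → ((X.drop k).take t).count true ≤ M := by
    intro k hk
    rw [← frag_eq]
    exact Finset.le_sup (f := fun i' => (frag X i' (i' + t)).count true)
      (Finset.mem_range.2 (by omega))
  have hle : ∀ x, ((rot x P).take t).count true ≤ M := by
    intro x
    rw [hP]
    rcases le_total x n with hx | hx
    · rw [take_rot_low X n x t hX hx (by omega)]
      rcases le_total x i with hxi | hxi
      · exact hMle x hxi
      · refine le_trans ?_ (hMle i le_rfl)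
        rw [List.take_of_length_le (l := X.drop i) (by simp; omega)]
        exact ((List.take_sublist _ _).trans (List.drop_sublist_drop_left X hxi)).count_le _
    · refine (take_rot_high X n x t hX hx (by omega)).trans ?_
      simpa using hMle 0 (by omega)
  obtain ⟨k, hk, hkM⟩ := Finset.exists_mem_eq_sup (Finset.range (n - t + 1)) (by simp)
    (fun i' => (frag X i' (i' + t)).count true)
  have hk' := Finset.mem_range.1 hk
  apply le_antisymm
  · apply Nat.sInf_le
    refine ⟨k, by omega, ?_⟩
    have hkc : ((rot k P).take t).count true = M := by
      rw [hP, take_rot_low X n k t hX (by omega) (by omega), hM, hkM]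
      simp only [frag_eq]
    rw [hval, hkc]
  · apply le_csInf
    · exact ⟨_, 0, by omega, rfl⟩
    · rintro v ⟨x, -, rfl⟩
      rw [hval]
      have := hle x
      omega
end

section
/- Let Q be a string of length q ≥ 1, let r ∈ [0..q), let U and V be strings, and let m be an integer with m ≤ |U| and m ≤ |V|. Define I = { a ∈ [0..|U|) : U[a] ≠ Q[a mod q] } and J = { b ∈ [0..|V|) : V[b] ≠ Q[(b+r) mod q] }. Let p ∈ [0..|U|−m] and x ∈ [0..|V|−m] satisfy p ≡ x + r (mod q). Then δH(U[p..p+m), V[x..x+m)) = |I ∩ [p..p+m)| + |J ∩ [x..x+m)| − Σ_{t=0}^{m−1} ∇(p+t, x+t), where ∇(a,b) = 0 if not both a ∈ I and b ∈ J, ∇(a,b) = 1 if a ∈ I, b ∈ J, and U[a] ≠ V[b], and ∇(a,b) = 2 if a ∈ I, b ∈ J, and U[a] = V[b]. -/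
/-- The set of misperiods of `S` with respect to the rotation of `Q` by `shift`, i.e.,
positions `a ∈ [0..|S|)` with `S[a] ≠ Q[(a + shift) mod |Q|]`. -/
def misperiods {α : Type*} [DecidableEq α] (S Q : List α) (shift : ℕ) : Finset ℕ :=
  (Finset.range S.length).filter (fun a => S[a]? ≠ Q[(a + shift) % Q.length]?)

/-- The mismatch-correcting function `∇(a,b)`: it is `0` unless `a` is a misperiod of `U`
and `b` is a misperiod of `V` (w.r.t. `Q` and its rotation by `r`), in which case it is `2`
if `U[a] = V[b]` and `1` otherwise. -/
def nabla {α : Type*} [DecidableEq α] (U V Q : List α) (r : ℕ) (a b : ℕ) : ℕ :=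
  if a ∈ misperiods U Q 0 ∧ b ∈ misperiods V Q r then
    (if U[a]? = V[b]? then 2 else 1)
  else 0

theorem frag_step {α : Type*} (S : List α) (p m : ℕ) (h : p + m < S.length) :
    frag S p (p + (m + 1)) = frag S p (p + m) ++ [S[p + m]] := by
  unfold frag
  rw [← Nat.add_assoc, List.take_succ_eq_append_getElem h, List.drop_append_of_le_length]
  simp
  omega

theorem length_frag_window {α : Type*} (S : List α) (p m : ℕ) (h : p + m ≤ S.length) :
    (frag S p (p + m)).length = m := by
  unfold frag
  simp
  omega

theorem card_step (I : Finset ℕ) (p m : ℕ) :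
    ((I ∩ Finset.Ico p (p + (m + 1))).card : ℤ) =
      (I ∩ Finset.Ico p (p + m)).card + if p + m ∈ I then 1 else 0 := by
  have h : Finset.Ico p (p + (m + 1)) = insert (p + m) (Finset.Ico p (p + m)) := by
    ext a
    simp only [Finset.mem_Ico, Finset.mem_insert]
    omega
  rw [h]
  split_ifs with hI
  · rw [Finset.inter_insert_of_mem hI, Finset.card_insert_of_notMem (by simp)]
    push_cast
    rfl
  · rw [Finset.inter_insert_of_notMem hI]
    simp

/-- The Hamming distance of aligned windows of two strings that are approximately periodic
with aligned periodicities equals the number of misperiods in the two windows minus the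
correction term `Σ_t ∇(p+t, x+t)`. -/
theorem hamDist_windows_eq_misperiods_sub_surplus {α : Type*} [DecidableEq α]
    (Q : List α) (q : ℕ) (hQ : Q.length = q) (hq : 1 ≤ q) (r : ℕ) (hr : r < q)
    (U V : List α) (m : ℕ) (hmU : m ≤ U.length) (hmV : m ≤ V.length)
    (p x : ℕ) (hp : p + m ≤ U.length) (hx : x + m ≤ V.length)
    (hmod : p % q = (x + r) % q) :
    (hamDist (frag U p (p + m)) (frag V x (x + m)) : ℤ) =
      ((misperiods U Q 0 ∩ Finset.Ico p (p + m)).card : ℤ) +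
        ((misperiods V Q r ∩ Finset.Ico x (x + m)).card : ℤ) -
        ∑ t ∈ Finset.range m, (nabla U V Q r (p + t) (x + t) : ℤ) := by
  subst hQ
  induction m with
  | zero => simp [hamDist, frag]
  | succ m ih =>
    have ih := ih (by omega) (by omega) (by omega) (by omega)
    have hU : p + m < U.length := by omega
    have hV : x + m < V.length := by omega
    have hmod2 : (p + m) % Q.length = (x + m + r) % Q.length := by
      have : p + m ≡ x + r + m [MOD Q.length] := Nat.ModEq.add_right m hmod
      rw [show x + m + r = x + r + m by omega]
      exact this
    have hd : hamDist (frag U p (p + (m + 1))) (frag V x (x + (m + 1))) =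
        hamDist (frag U p (p + m)) (frag V x (x + m)) +
          if U[p + m]? = V[x + m]? then 0 else 1 := by
      rw [frag_step U p m hU, frag_step V x m hV]
      unfold hamDist
      rw [List.zipWith_append (by
        rw [length_frag_window U p m (by omega), length_frag_window V x m (by omega)])]
      simp [hU, hV]
    rw [hd, card_step, card_step, Finset.sum_range_succ]
    push_cast
    rw [ih]
    have key : (if U[p + m]? = V[x + m]? then (0 : ℤ) else 1) =
        (if p + m ∈ misperiods U Q 0 then 1 else 0) +
        (if x + m ∈ misperiods V Q r then 1 else 0) - (nabla U V Q r (p + m) (x + m) : ℤ) := by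
      have h1 : p + m ∈ misperiods U Q 0 ↔ U[p + m]? ≠ Q[(x + m + r) % Q.length]? := by
        unfold misperiods
        rw [Finset.mem_filter, Finset.mem_range, Nat.add_zero, hmod2]
        exact and_iff_right hU
      have h2 : x + m ∈ misperiods V Q r ↔ V[x + m]? ≠ Q[(x + m + r) % Q.length]? := by
        unfold misperiods
        rw [Finset.mem_filter, Finset.mem_range]
        exact and_iff_right hV
      unfold nabla
      simp only [h1, h2]
      generalize U[p + m]? = a
      generalize V[x + m]? = b
      generalize Q[(x + m + r) % Q.length]? = c
      by_cases hac : a = c <;> by_cases hbc : b = c <;> by_cases hab : a = b <;> simp_all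
    linarith
end

section
/- Let T be a string of length n, let P be a string of length m with P = P1·P2 for strings P1, P2, and let k ≥ 0 be an integer. If i ∈ [0..n−m] and δH(T[i..i+m), rot_x(P)) ≤ k for some x ∈ [0..m], then there exists a position s with i ≤ s such that either s + |P1| ≤ i + m and δH(T[s..s+|P1|), P1) ≤ k, or s + |P2| ≤ i + m and δH(T[s..s+|P2|), P2) ≤ k. In particular, every circular k-mismatch occurrence of P in T contains a standard k-mismatch occurrence of P1 or of P2. -/
theorem hamDist_mid_le {α : Type*} [DecidableEq α] (T A B C : List α) (i m : ℕ)
    (hm : m = (A ++ B ++ C).length) :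
    hamDist (frag T (i + A.length) (i + A.length + B.length)) B
      ≤ hamDist (frag T i (i + m)) (A ++ B ++ C) := by
  have hB : B = ((A ++ B ++ C).take (A.length + B.length)).drop A.length := by
    simp [List.take_append]
  have hU : frag T (i + A.length) (i + A.length + B.length)
      = ((frag T i (i + m)).take (A.length + B.length)).drop A.length := by
    have h2 : min (i + (A.length + B.length)) (i + m) = i + (A.length + B.length) := by
      simp at hm; omega
    simp only [frag, List.take_drop, List.take_take, List.drop_drop, h2, Nat.add_assoc]
  rw [hU]
  conv_lhs => arg 2; rw [hB]
  unfold hamDist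
  generalize A ++ B ++ C = W
  have hs := (List.drop_sublist A.length _).trans
    (List.take_sublist (A.length + B.length)
      (List.zipWith (fun a b => if a = b then (0 : ℕ) else 1) (frag T i (i + m)) W))
  rw [List.take_zipWith, List.drop_zipWith] at hs
  exact hs.sum_le_sum (by simp)

/-- Every circular `k`-mismatch occurrence of `P = P1·P2` in `T` contains a standard
`k`-mismatch occurrence of `P1` or of `P2`. -/
theorem circular_occurrence_contains_half_occurrence {α : Type*} [DecidableEq α]
    (T P P1 P2 : List α) (n m k : ℕ)
    (hT : T.length = n) (hPm : P.length = m) (hP : P = P1 ++ P2)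
    (i : ℕ) (hi : i + m ≤ n)
    (hocc : ∃ x, x ≤ m ∧ hamDist (frag T i (i + m)) (rot x P) ≤ k) :
    ∃ s, i ≤ s ∧
      ((s + P1.length ≤ i + m ∧ hamDist (frag T s (s + P1.length)) P1 ≤ k) ∨
        (s + P2.length ≤ i + m ∧ hamDist (frag T s (s + P2.length)) P2 ≤ k)) := by
  obtain ⟨x, hx, h⟩ := hocc
  have hlen : m = P1.length + P2.length := by rw [← hPm, hP, List.length_append]
  rcases le_total x P1.length with hc | hc
  · refine ⟨i + (P1.drop x).length, by omega, Or.inr ⟨by simp; omega, ?_⟩⟩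
    have hr : rot x P = P1.drop x ++ P2 ++ P1.take x := by
      simp [rot, hP, List.drop_append_of_le_length hc, List.take_append_of_le_length hc]
    rw [hr] at h
    exact (hamDist_mid_le T _ P2 _ i m (by simp; omega)).trans h
  · refine ⟨i + (P2.drop (x - P1.length)).length, by omega, Or.inl ⟨by simp; omega, ?_⟩⟩
    have hr : rot x P = P2.drop (x - P1.length) ++ P1 ++ P2.take (x - P1.length) := by
      simp [rot, hP, List.drop_append, List.take_append, List.drop_eq_nil_of_le hc,
        List.take_of_length_le hc]
    rw [hr] at h
    exact (hamDist_mid_le T _ P1 _ i m (by simp; omega)).trans h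
end

section
/- Let P be an s×s permutation matrix (a 0/1 matrix with exactly one 1 in each row and each column), and define the (s+1)×(s+1) matrix P^Σ by P^Σ[i,j] = Σ_{i' ≥ i} Σ_{j' < j} P[i',j'] for i,j ∈ [0..s]. Define D[i,j] = 2·P^Σ[i,j] + i − j. Then D is a Monge matrix: for all i ≤ j and ℓ ≤ r in [0..s], D[i,ℓ] + D[j,r] ≤ D[i,r] + D[j,ℓ]. -/
/-- If `P` is an `s×s` permutation matrix, `P^Σ[i,j] = Σ_{i' ≥ i} Σ_{j' < j} P[i',j']`, and
`D[i,j] = 2·P^Σ[i,j] + i − j`, then `D` is a Monge matrix. -/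
theorem monge_of_permutation_matrix (s : ℕ) (P : ℕ → ℕ → ℕ)
    (h01 : ∀ i j, i < s → j < s → P i j = 0 ∨ P i j = 1)
    (hrow : ∀ i, i < s → ∑ j ∈ Finset.range s, P i j = 1)
    (hcol : ∀ j, j < s → ∑ i ∈ Finset.range s, P i j = 1)
    (PSigma : ℕ → ℕ → ℕ)
    (hPSigma : ∀ i j, i ≤ s → j ≤ s →
      PSigma i j = ∑ i' ∈ Finset.Ico i s, ∑ j' ∈ Finset.range j, P i' j')
    (D : ℕ → ℕ → ℤ)
    (hD : ∀ i j, i ≤ s → j ≤ s → D i j = 2 * (PSigma i j : ℤ) + (i : ℤ) - (j : ℤ)) :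
    ∀ i j ℓ r, i ≤ j → j ≤ s → ℓ ≤ r → r ≤ s →
      D i ℓ + D j r ≤ D i r + D j ℓ := by
  intro i j l r hij hjs hlr hrs
  have his := hij.trans hjs
  have hls := hlr.trans hrs
  rw [hD i l his hls, hD j r hjs hrs, hD i r his hrs, hD j l hjs hls]
  have key : PSigma i l + PSigma j r ≤ PSigma i r + PSigma j l := by
    rw [hPSigma i l his hls, hPSigma j r hjs hrs, hPSigma i r his hrs, hPSigma j l hjs hls,
      ← Finset.sum_Ico_consecutive _ hij hjs,
      ← Finset.sum_Ico_consecutive (fun i' => ∑ j' ∈ Finset.range r, P i' j') hij hjs]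
    have h : ∑ i' ∈ Finset.Ico i j, ∑ j' ∈ Finset.range l, P i' j'
        ≤ ∑ i' ∈ Finset.Ico i j, ∑ j' ∈ Finset.range r, P i' j' :=
      Finset.sum_le_sum fun i' _ =>
        Finset.sum_le_sum_of_subset (Finset.range_mono hlr)
    omega
  omega
end

section
/- Let P be a string of length M, let k ≥ 0 be an integer, and let B and C be strings with |B·C| ≥ M. Let A_ℓ be the suffix of B of length min(|B|, M−1), let A_r be the prefix of C of length min(|C|, M−1), and let A = A_ℓ·A_r. Then Cocc_k(P, B·C) = Cocc_k(P, B) ∪ { |B| + i : i ∈ Cocc_k(P, C) } ∪ { (|B| − |A_ℓ|) + i : i ∈ Cocc_k(P, A) }, where for a string S with |S| ≥ M, Cocc_k(P,S) = { i ∈ [0..|S|−M] : δH(S[i..i+M), rot_x(P)) ≤ k for some x ∈ [0..M] } (and Cocc_k(P,S) = ∅ if |S| < M). -/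
/-- `Cocc_k(P,S)`: the set of starting positions of circular `k`-mismatch occurrences of
`P` in `S` (empty if `|S| < |P|`). -/
def CoccSet {α : Type*} [DecidableEq α] (k : ℕ) (P S : List α) : Set ℕ :=
  {i | i + P.length ≤ S.length ∧
    ∃ x, x ≤ P.length ∧ hamDist (frag S i (i + P.length)) (rot x P) ≤ k}

/-- Fragments of a middle factor are fragments of the whole string. -/
theorem frag_mid {α : Type*} (X T Y : List α) (i m : ℕ) (h : i + m ≤ T.length) :
    frag (X ++ T ++ Y) (X.length + i) (X.length + i + m) = frag T i (i + m) := by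
  unfold frag
  rw [List.append_assoc, Nat.add_assoc, List.take_length_add_append,
    List.drop_length_add_append, List.take_append_of_le_length h]

theorem mem_cocc_mid {α : Type*} [DecidableEq α] (k : ℕ) (P X T Y : List α) (i : ℕ)
    (h : i + P.length ≤ T.length) :
    X.length + i ∈ CoccSet k P (X ++ T ++ Y) ↔ i ∈ CoccSet k P T := by
  unfold CoccSet
  simp only [Set.mem_setOf_eq]
  rw [frag_mid X T Y i _ h]
  refine and_congr_left fun _ => ?_
  simp only [List.length_append]
  omega

theorem cocc_concat_decomposition {α : Type*} [DecidableEq α]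
    (P B C : List α) (M k : ℕ) (hM : P.length = M) (hlen : M ≤ (B ++ C).length) :
    CoccSet k P (B ++ C) =
      CoccSet k P B ∪
        ((fun i => B.length + i) '' CoccSet k P C) ∪
        ((fun i => (B.length - (B.drop (B.length - (M - 1))).length) + i) ''
          CoccSet k P (B.drop (B.length - (M - 1)) ++ C.take (M - 1))) := by
  have hB : ∀ i, i + P.length ≤ B.length → (i ∈ CoccSet k P (B ++ C) ↔ i ∈ CoccSet k P B) := by
    intro i h
    simpa using mem_cocc_mid k P [] B C i h
  have hC : ∀ i, i + P.length ≤ C.length →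
      (B.length + i ∈ CoccSet k P (B ++ C) ↔ i ∈ CoccSet k P C) := by
    intro i h
    simpa using mem_cocc_mid k P B C [] i h
  obtain ⟨n, hn⟩ : ∃ n, n = B.length - (M - 1) := ⟨_, rfl⟩
  have hAl : B.length - (B.drop (B.length - (M - 1))).length = n := by
    rw [List.length_drop]; omega
  rw [hAl, ← hn]
  have hlA : (B.drop n ++ C.take (M - 1)).length = (B.length - n) + min (M - 1) C.length := by
    simp
  have hA : ∀ i, i + P.length ≤ (B.drop n ++ C.take (M - 1)).length →
      (n + i ∈ CoccSet k P (B ++ C) ↔ i ∈ CoccSet k P (B.drop n ++ C.take (M - 1))) := by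
    intro i h
    have h1 := mem_cocc_mid k P (B.take n) _ (C.drop (M - 1)) i h
    have h2 : B.take n ++ (B.drop n ++ C.take (M - 1)) ++ C.drop (M - 1) = B ++ C := by
      rw [← List.append_assoc, List.take_append_drop, List.append_assoc, List.take_append_drop]
    have h3 : (B.take n).length = n := by
      rw [List.length_take]; omega
    rwa [h2, h3] at h1
  ext i
  constructor
  · intro hi
    have hle : i + P.length ≤ B.length + C.length := by
      have := hi.1
      rwa [List.length_append] at this
    by_cases h1 : i + P.length ≤ B.length
    · exact Or.inl (Or.inl ((hB i h1).1 hi))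
    by_cases h2 : B.length ≤ i
    · obtain ⟨j, rfl⟩ := Nat.exists_eq_add_of_le h2
      exact Or.inl (Or.inr ⟨j, (hC j (by omega)).1 hi, rfl⟩)
    · obtain ⟨j, rfl⟩ := Nat.exists_eq_add_of_le (show n ≤ i by omega)
      exact Or.inr ⟨j, (hA j (by omega)).1 hi, rfl⟩
  · rintro ((hi | ⟨j, hj, rfl⟩) | ⟨j, hj, rfl⟩)
    · exact (hB i hi.1).2 hi
    · exact (hC j hj.1).2 hj
    · exact (hA j hj.1).2 hj
end
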